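/- arXiv:1602.01133 — 2 statements merged into one kernel-verified Lean document; each statement's English description precedes it below -/
import Mathlib

section
/- Every non-negative integer m can be written as m = 2·T_x + T_y + T_z for some non-negative integers x, y, z. -/
/-- The `k`-th triangular number. -/
def T (k : ℕ) : ℕ := k * (k + 1) / 2

/-!
Multiplying by four turns `m = 2 T_x + T_y + T_z` into a representation
`4 m + 2 = (2 u + 1)² + (2 v + 1)² + (2 w)²` with `u = x`, `v + w = y`, `v - w = z`, where negative
indices are harmless because `T_{-k-1} = T_k`. Three squares with sum `4 m + 2` always have these
parities, so it suffices that `n = 4 m + 2` is a sum of three squares.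

By Dirichlet's theorem there is `d ≡ 1 (mod 4)` with `d n - 1` prime, and quadratic reciprocity
makes `-d` a square modulo this prime. This yields a positive definite integral ternary form of
determinant one with `n` on its diagonal. By Hermite, a form of determinant one in `k` variables has
minimum at most `(4/3) ^ ((k - 1) / 2)`. This is less than two for `k ≤ 5`, so the minimum is one,
a one-dimensional summand splits off, and by induction the form is a sum of squares.
-/

open Matrix

section Congruence

variable {ι R : Type*} [Fintype ι] [DecidableEq ι] [CommRing R]

/-- Congruence `B = Uᵀ A U` over the ring of coefficients: the bilinear forms with Gram matrices `A`
and `B` differ by a change of basis. -/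
def IsCongruent (A B : Matrix ι ι R) : Prop :=
  ∃ U : Matrix ι ι R, IsUnit U ∧ B = Uᵀ * A * U

namespace IsCongruent

variable {A B C : Matrix ι ι R}

theorem refl (A : Matrix ι ι R) : IsCongruent A A :=
  ⟨1, isUnit_one, by simp⟩

theorem symm (h : IsCongruent A B) : IsCongruent B A := by
  obtain ⟨_, ⟨U, rfl⟩, rfl⟩ := h
  refine ⟨↑U⁻¹, U⁻¹.isUnit, ?_⟩
  have hU : (↑U⁻¹ : Matrix ι ι R)ᵀ * (U : Matrix ι ι R)ᵀ = 1 := by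
    rw [← transpose_mul, Units.mul_inv, transpose_one]
  calc A = 1 * A * (U * ↑U⁻¹) := by rw [Units.mul_inv, one_mul, mul_one]
    _ = _ := by simp only [← hU, Matrix.mul_assoc]

theorem trans (hAB : IsCongruent A B) (hBC : IsCongruent B C) : IsCongruent A C := by
  obtain ⟨U, hU, rfl⟩ := hAB
  obtain ⟨V, hV, rfl⟩ := hBC
  exact ⟨U * V, hU.mul hV, by simp only [transpose_mul, Matrix.mul_assoc]⟩

theorem submatrix_perm (A : Matrix ι ι R) (σ : Equiv.Perm ι) :
    IsCongruent A (A.submatrix σ σ) := by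
  refine ⟨(σ.permMatrix R)ᵀ, ?_, ?_⟩
  · rw [isUnit_transpose, isUnit_iff_isUnit_det, det_permutation]
    exact (Equiv.Perm.sign σ).isUnit.map (Int.castRingHom R)
  · rw [transpose_transpose, Equiv.Perm.permMatrix, ← PEquiv.toMatrix_symm, ← Equiv.toPEquiv_symm,
      PEquiv.toMatrix_toPEquiv_mul, PEquiv.mul_toMatrix_toPEquiv, Equiv.symm_symm,
      submatrix_submatrix, Function.comp_id, Function.id_comp]

theorem det_eq {A B : Matrix ι ι ℤ} (h : IsCongruent A B) : B.det = A.det := by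
  obtain ⟨U, hU, rfl⟩ := h
  have hU2 : U.det * U.det = 1 := Int.isUnit_mul_self ((isUnit_iff_isUnit_det U).1 hU)
  rw [det_mul, det_mul, det_transpose]
  linear_combination A.det * hU2

theorem posDef [PartialOrder R] [StarRing R] [TrivialStar R] (h : IsCongruent A B)
    (hA : A.PosDef) : B.PosDef := by
  obtain ⟨U, hU, rfl⟩ := h
  rwa [← conjTranspose_eq_transpose_of_trivial, ← star_eq_conjTranspose,
    hU.posDef_star_left_conjugate_iff]

end IsCongruent

end Congruence

section Condensation

variable {R : Type*} {n : ℕ}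

/-- Chió's condensation of `A` along its upper left entry: `A 0 0` times the Schur complement of
that entry. For a symmetric matrix it is what remains of the form after completing the square in the
first variable, with denominators cleared. -/
def chio [CommRing R] (A : Matrix (Fin (n + 1)) (Fin (n + 1)) R) : Matrix (Fin n) (Fin n) R :=
  A 0 0 • A.submatrix Fin.succ Fin.succ - vecMulVec (fun i ↦ A i.succ 0) (fun j ↦ A 0 j.succ)

section CommRing

variable [CommRing R] (A : Matrix (Fin (n + 1)) (Fin (n + 1)) R)

theorem chio_apply (i j : Fin n) :
    chio A i j = A 0 0 * A i.succ j.succ - A i.succ 0 * A 0 j.succ :=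
  rfl

variable {A} in
theorem isSymm_chio (hA : A.IsSymm) : (chio A).IsSymm :=
  .ext fun i j ↦ by
    rw [chio_apply, chio_apply, hA.apply i.succ j.succ, hA.apply 0 j.succ, hA.apply i.succ 0,
      mul_comm (A 0 j.succ)]

variable {A} in
theorem eq_one_of_chio_eq_one (hA : A.IsSymm) (h₀₀ : A 0 0 = 1) (h₀ : ∀ j : Fin n, A 0 j.succ = 0)
    (hchio : chio A = 1) : A = 1 := by
  ext i j
  cases i using Fin.cases <;> cases j using Fin.cases
  case zero.zero => simp [h₀₀]
  case zero.succ j => simp [h₀, (Fin.succ_ne_zero j).symm]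
  case succ.zero i => simp [hA.apply 0, h₀]
  case succ.succ i j => simpa [chio_apply, h₀₀, h₀, one_apply] using congrFun₂ hchio i j

theorem mulVec_vecCons (y₀ : R) (y : Fin n → R) :
    A *ᵥ vecCons y₀ y =
      vecCons (A 0 0 * y₀ + (fun j ↦ A 0 j.succ) ⬝ᵥ y)
        (y₀ • (fun i ↦ A i.succ 0) + A.submatrix Fin.succ Fin.succ *ᵥ y) := by
  ext i
  cases i using Fin.cases <;> simp [mulVec, dotProduct, Fin.sum_univ_succ, mul_comm]

/-- Completing the square in the first variable. -/
theorem apply_zero_mul_vecCons_dotProduct_mulVec_vecCons (x₀ y₀ : R) (x y : Fin n → R) :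
    A 0 0 * (vecCons x₀ x ⬝ᵥ A *ᵥ vecCons y₀ y) =
      (A 0 0 * x₀ + (fun i ↦ A i.succ 0) ⬝ᵥ x) * (A 0 0 * y₀ + (fun j ↦ A 0 j.succ) ⬝ᵥ y) +
        x ⬝ᵥ chio A *ᵥ y := by
  rw [mulVec_vecCons, cons_dotProduct_cons, chio, sub_mulVec, smul_mulVec, vecMulVec_mulVec,
    dotProduct_comm _ x]
  simp only [dotProduct_add, dotProduct_sub, dotProduct_smul, smul_eq_mul, op_smul_eq_mul]
  ring

theorem det_eq_apply_zero_mul_det_submatrix_succ (h : ∀ i : Fin n, A i.succ 0 = 0) :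
    A.det = A 0 0 * (A.submatrix Fin.succ Fin.succ).det := by
  simp [det_succ_column_zero, Fin.sum_univ_succ, h]

theorem apply_zero_mul_det_chio : A 0 0 * (chio A).det = A 0 0 ^ n * A.det := by
  let B : Matrix (Fin (n + 1)) (Fin (n + 1)) R := of (vecCons (A 0) fun i ↦ vecCons 0 (chio A i))
  let C : Matrix (Fin (n + 1)) (Fin (n + 1)) R := of fun i j ↦ vecCons 1 (fun _ ↦ A 0 0) i * A i j
  have hB : B.det = A 0 0 * (chio A).det :=
    det_eq_apply_zero_mul_det_submatrix_succ B fun _ ↦ rfl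
  have hC : C.det = A 0 0 ^ n * A.det := by
    simp [C, det_mul_column, Fin.prod_univ_succ]
  have hCB : C.det = B.det := by
    refine det_eq_of_forall_row_eq_smul_add_const (vecCons 0 fun i ↦ A i.succ 0) 0 rfl fun i j ↦ ?_
    cases i using Fin.cases <;> cases j using Fin.cases <;> simp [B, C, chio_apply, mul_comm]
  rw [← hB, ← hCB, hC]

/-- The block matrix `!![1, 0; t, V]`. Its rows are the new basis in a change of basis that keeps
the first basis vector, acts by `V` modulo that vector, and shifts the `i`-th lift by `t i` times
it. -/
def bordered (t : Fin n → R) (V : Matrix (Fin n) (Fin n) R) :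
    Matrix (Fin (n + 1)) (Fin (n + 1)) R :=
  of (vecCons (vecCons 1 0) fun i ↦ vecCons (t i) (V i))

variable (t : Fin n → R) (V : Matrix (Fin n) (Fin n) R)

theorem bordered_zero : bordered t V 0 = vecCons 1 0 :=
  rfl

theorem bordered_succ (i : Fin n) : bordered t V i.succ = vecCons (t i) (V i) :=
  rfl

theorem isUnit_bordered {V : Matrix (Fin n) (Fin n) R} (hV : IsUnit V) :
    IsUnit (bordered t V) := by
  have hdet : (bordered t V).det = V.det := by
    rw [← det_transpose, det_eq_apply_zero_mul_det_submatrix_succ _ fun _ ↦ rfl,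
      ← det_transpose V]
    exact one_mul _
  rwa [isUnit_iff_isUnit_det, hdet, ← isUnit_iff_isUnit_det]

theorem bordered_mul_mul_transpose_zero_zero :
    (bordered t V * A * (bordered t V)ᵀ) 0 0 = A 0 0 := by
  rw [mul_mul_apply, transpose_transpose, bordered_zero, mulVec_vecCons]
  simp

theorem bordered_mul_mul_transpose_zero_succ (j : Fin n) :
    (bordered t V * A * (bordered t V)ᵀ) 0 j.succ =
      A 0 0 * t j + (fun k ↦ A 0 k.succ) ⬝ᵥ V j := by
  rw [mul_mul_apply, transpose_transpose, bordered_zero, bordered_succ, mulVec_vecCons]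
  simp

theorem bordered_mul_mul_transpose_succ_zero (i : Fin n) :
    (bordered t V * A * (bordered t V)ᵀ) i.succ 0 =
      A 0 0 * t i + (fun k ↦ A k.succ 0) ⬝ᵥ V i := by
  rw [mul_mul_apply, transpose_transpose, bordered_zero, bordered_succ, mulVec_vecCons]
  simp [mul_comm, dotProduct_comm]

theorem chio_bordered_mul_mul_transpose :
    chio (bordered t V * A * (bordered t V)ᵀ) = V * chio A * Vᵀ := by
  ext i j
  rw [chio_apply, bordered_mul_mul_transpose_zero_zero, bordered_mul_mul_transpose_zero_succ,
    bordered_mul_mul_transpose_succ_zero, mul_mul_apply, mul_mul_apply, sub_eq_iff_eq_add']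
  exact apply_zero_mul_vecCons_dotProduct_mulVec_vecCons A (t i) (t j) (V i) (V j)

end CommRing

section Order

variable [CommRing R] [LinearOrder R] [IsStrictOrderedRing R] [StarRing R] [TrivialStar R]
  {A : Matrix (Fin (n + 1)) (Fin (n + 1)) R}

theorem posDef_chio (hA : A.PosDef) : (chio A).PosDef := by
  have hsymm : A.IsSymm := isHermitian_iff_isSymm.1 hA.isHermitian
  refine .of_dotProduct_mulVec_pos (isHermitian_iff_isSymm.2 (isSymm_chio hsymm)) fun x hx ↦ ?_
  have ha : 0 < A 0 0 := hA.diag_pos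
  set c := (fun j ↦ A 0 j.succ) ⬝ᵥ x with hc
  have hy : vecCons (-c) (A 0 0 • x) ≠ 0 := fun h ↦ hx <| by
    simpa [ha.ne'] using congrArg vecTail h
  have hpos := mul_pos ha (hA.dotProduct_mulVec_pos hy)
  rw [star_trivial, apply_zero_mul_vecCons_dotProduct_mulVec_vecCons, dotProduct_smul, smul_eq_mul,
    dotProduct_smul, smul_eq_mul, ← hc, mul_neg, neg_add_cancel, mul_zero, zero_add, mulVec_smul,
    smul_dotProduct, dotProduct_smul, smul_eq_mul, smul_eq_mul] at hpos
  rw [star_trivial]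
  exact pos_of_mul_pos_right (pos_of_mul_pos_right hpos ha.le) ha.le

theorem posDef_of_posDef_chio (hA : A.IsSymm) (ha : 0 < A 0 0) (hchio : (chio A).PosDef) :
    A.PosDef := by
  refine .of_dotProduct_mulVec_pos (isHermitian_iff_isSymm.2 hA) fun x hx ↦ ?_
  obtain ⟨x₀, y, rfl⟩ : ∃ x₀ y, x = vecCons x₀ y := ⟨_, _, (cons_head_tail x).symm⟩
  have hrow : (fun i : Fin n ↦ A i.succ 0) = fun i ↦ A 0 i.succ := funext fun i ↦ hA.apply 0 i.succ
  rw [star_trivial]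
  refine pos_of_mul_pos_right ?_ ha.le
  rw [apply_zero_mul_vecCons_dotProduct_mulVec_vecCons, hrow]
  by_cases hy : y = 0
  · have hx₀ : x₀ ≠ 0 := by
      rintro rfl
      exact hx (by simp [hy])
    simpa [hy, ← pow_two] using sq_pos_of_ne_zero (mul_ne_zero ha.ne' hx₀)
  · simpa using add_pos_of_nonneg_of_pos (mul_self_nonneg _) (hchio.dotProduct_mulVec_pos hy)

theorem posDef_of_forall_leading_minor_pos {n : ℕ} {A : Matrix (Fin n) (Fin n) R} (hA : A.IsSymm)
    (h : ∀ k (hk : k ≤ n), 0 < (A.submatrix (Fin.castLE hk) (Fin.castLE hk)).det) :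
    A.PosDef := by
  induction n with
  | zero => exact .of_dotProduct_mulVec_pos (isHermitian_iff_isSymm.2 hA) fun x hx ↦
      (hx (Subsingleton.elim _ _)).elim
  | succ n ih =>
    have ha : 0 < A 0 0 := by simpa using h 1 (by simp)
    refine posDef_of_posDef_chio hA ha (ih (isSymm_chio hA) fun k hk ↦ ?_)
    have hdet := apply_zero_mul_det_chio
      (A.submatrix (Fin.castLE (Nat.succ_le_succ hk)) (Fin.castLE (Nat.succ_le_succ hk)))
    refine pos_of_mul_pos_right (hdet.symm ▸ ?_ : 0 < A 0 0 * _) ha.le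
    exact mul_pos (pow_pos ha k) (h (k + 1) _)

end Order

end Condensation

section Hermite

theorem exists_abs_two_mul_add_mul_le {a : ℤ} (ha : 0 < a) (u : ℤ) :
    ∃ t, |2 * (a * t + u)| ≤ a := by
  lift a to ℕ using ha.le
  have hlower := Int.le_bmod (x := u) (Nat.cast_pos.1 ha)
  have hupper := Int.bmod_lt (x := u) (Nat.cast_pos.1 ha)
  refine ⟨-u.bdiv a, ?_⟩
  rw [mul_neg, neg_add_eq_sub, ← Int.bmod_eq_self_sub_mul_bdiv, abs_le]
  omega

variable {n : ℕ} {A : Matrix (Fin (n + 1)) (Fin (n + 1)) ℤ}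

theorem IsCongruent.exists_reduced_of_chio {C : Matrix (Fin n) (Fin n) ℤ} (ha : 0 < A 0 0)
    (h : IsCongruent (chio A) C) :
    ∃ B, IsCongruent A B ∧ B 0 0 = A 0 0 ∧ chio B = C ∧ ∀ j : Fin n, |2 * B 0 j.succ| ≤ A 0 0 := by
  obtain ⟨V, hV, rfl⟩ := h
  choose t ht using fun j ↦
    exists_abs_two_mul_add_mul_le ha ((fun k : Fin n ↦ A 0 k.succ) ⬝ᵥ Vᵀ j)
  refine ⟨bordered t Vᵀ * A * (bordered t Vᵀ)ᵀ, ⟨(bordered t Vᵀ)ᵀ, ?_, by simp⟩,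
    bordered_mul_mul_transpose_zero_zero .., ?_, fun j ↦ ?_⟩
  · exact (isUnit_transpose _).2 (isUnit_bordered t ((isUnit_transpose _).2 hV))
  · rw [chio_bordered_mul_mul_transpose, transpose_transpose]
  · rw [bordered_mul_mul_transpose_zero_succ]
    exact ht j

theorem exists_isCongruent_forall_apply_zero_le (hA : A.PosDef) :
    ∃ B, IsCongruent A B ∧ ∀ C, IsCongruent B C → B 0 0 ≤ C 0 0 := by
  obtain ⟨B, hAB, hmin⟩ := exists_minimalFor_of_wellFoundedLT (IsCongruent A)
    (fun B ↦ (B 0 0).toNat) ⟨A, .refl A⟩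
  refine ⟨B, hAB, fun C hBC ↦ ?_⟩
  have hC : 0 < C 0 0 := (hAB.trans hBC |>.posDef hA).diag_pos
  have hle : (C 0 0).toNat ≤ (B 0 0).toNat → (B 0 0).toNat ≤ (C 0 0).toNat :=
    hmin (hAB.trans hBC)
  omega

/-- Hermite's bound `(4/3) ^ (n/2) * det A ^ (1/(n+1))` for the minimum, raised to the power `n + 1`
and with denominators cleared. -/
theorem exists_isCongruent_apply_zero_pow_le {n : ℕ} {A : Matrix (Fin (n + 1)) (Fin (n + 1)) ℤ}
    (hA : A.PosDef) :
    ∃ B, IsCongruent A B ∧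
      3 ^ (n + 1).choose 2 * B 0 0 ^ (n + 1) ≤ 4 ^ (n + 1).choose 2 * A.det := by
  induction n with
  | zero => exact ⟨A, .refl A, by simp⟩
  | succ n ih =>
    obtain ⟨B, hAB, hmin⟩ := exists_isCongruent_forall_apply_zero_le hA
    have hB : B.PosDef := hAB.posDef hA
    obtain ⟨C, hBC, hC⟩ := ih (posDef_chio hB)
    have ha : 0 < B 0 0 := hB.diag_pos
    obtain ⟨D, hBD, hD₀₀, rfl, hD⟩ := hBC.exists_reduced_of_chio ha
    refine ⟨B, hAB, ?_⟩
    have hswap : B 0 0 ≤ D 1 1 := by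
      simpa using hmin _ (hBD.trans (.submatrix_perm D (Equiv.swap 0 1)))
    have hsymm : D 1 0 = D 0 1 := (isHermitian_iff_isSymm.1 (hBD.posDef hB).isHermitian).apply 0 1
    have hchio : chio D 0 0 = B 0 0 * D 1 1 - D 0 1 ^ 2 := by
      rw [chio_apply, hD₀₀, Fin.succ_zero_eq_one, hsymm, sq]
    have hle : 3 * B 0 0 ^ 2 ≤ 4 * chio D 0 0 := by
      have : (2 * D 0 1) ^ 2 ≤ B 0 0 ^ 2 := sq_le_sq' (abs_le.1 (hD 0)).1 (abs_le.1 (hD 0)).2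
      nlinarith
    have hdet : (chio B).det = B 0 0 ^ n * A.det := by
      refine mul_left_cancel₀ ha.ne' ?_
      rw [apply_zero_mul_det_chio, hAB.det_eq, pow_succ']
      ring
    have hchoose : (n + 1 + 1).choose 2 = (n + 1).choose 2 + (n + 1) := by
      rw [Nat.choose_succ_succ' (n + 1) 1, Nat.choose_one_right, add_comm]
    refine le_of_mul_le_mul_left ?_ (pow_pos ha n)
    calc B 0 0 ^ n * (3 ^ (n + 1 + 1).choose 2 * B 0 0 ^ (n + 1 + 1))
        = 3 ^ (n + 1).choose 2 * (3 * B 0 0 ^ 2) ^ (n + 1) := by rw [hchoose]; ring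
      _ ≤ 3 ^ (n + 1).choose 2 * (4 * chio D 0 0) ^ (n + 1) := by gcongr
      _ = 4 ^ (n + 1) * (3 ^ (n + 1).choose 2 * chio D 0 0 ^ (n + 1)) := by ring
      _ ≤ 4 ^ (n + 1) * (4 ^ (n + 1).choose 2 * (chio B).det) := by gcongr
      _ = B 0 0 ^ n * (4 ^ (n + 1 + 1).choose 2 * A.det) := by rw [hdet, hchoose]; ring

theorem exists_isCongruent_apply_zero_eq_one (hn : n < 5) (hA : A.PosDef) (hdet : A.det = 1) :
    ∃ B, IsCongruent A B ∧ B 0 0 = 1 := by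
  obtain ⟨B, hAB, hle⟩ := exists_isCongruent_apply_zero_pow_le hA
  refine ⟨B, hAB, ?_⟩
  have hpos : 0 < B 0 0 := (hAB.posDef hA).diag_pos
  by_contra hne
  have h2 : 2 ^ (n + 1) ≤ B 0 0 ^ (n + 1) := by
    gcongr
    omega
  have hlt : (4 : ℤ) ^ (n + 1).choose 2 < 3 ^ (n + 1).choose 2 * 2 ^ (n + 1) := by
    interval_cases n <;> decide
  have := mul_le_mul_of_nonneg_left h2 (by positivity : (0 : ℤ) ≤ 3 ^ (n + 1).choose 2)
  rw [hdet, mul_one] at hle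
  linarith

theorem isCongruent_one_of_det_eq_one {n : ℕ} (hn : n ≤ 5) {A : Matrix (Fin n) (Fin n) ℤ}
    (hA : A.PosDef) (hdet : A.det = 1) : IsCongruent A 1 := by
  induction n with
  | zero => exact Subsingleton.elim A 1 ▸ .refl A
  | succ n ih =>
    obtain ⟨B, hAB, hB₀₀⟩ := exists_isCongruent_apply_zero_eq_one (by omega) hA hdet
    have hB : B.PosDef := hAB.posDef hA
    have hchio_det : (chio B).det = 1 := by
      simpa [hB₀₀, hAB.det_eq, hdet] using apply_zero_mul_det_chio B
    obtain ⟨D, hBD, hD₀₀, hD_chio, hD⟩ :=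
      (ih (by omega) (posDef_chio hB) hchio_det).exists_reduced_of_chio (by omega)
    have hD_symm : D.IsSymm := isHermitian_iff_isSymm.1 (hBD.posDef hB).isHermitian
    have hD₀ (j : Fin n) : D 0 j.succ = 0 := by
      have := abs_le.1 (hD j)
      omega
    exact eq_one_of_chio_eq_one hD_symm (hD₀₀.trans hB₀₀) hD₀ hD_chio ▸ hAB.trans hBD

end Hermite

section ThreeSquares

theorem exists_eq_sum_three_sq_of_dvd {n d y : ℤ} (hd : 0 < d) (hp : 0 < d * n - 1)
    (h : d * n - 1 ∣ y ^ 2 + d) : ∃ p q r : ℤ, n = p ^ 2 + q ^ 2 + r ^ 2 := by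
  obtain ⟨a, ha⟩ := h
  let A : Matrix (Fin 3) (Fin 3) ℤ := !![d * n - 1, y, 0; y, a, 1; 0, 1, n]
  have hA_det : A.det = 1 := by
    simp only [A, det_fin_three, of_apply, cons_val', cons_val_zero, cons_val_one, cons_val,
      cons_val_fin_one]
    linear_combination -n * ha
  have hA_symm : A.IsSymm := .ext fun i j ↦ by fin_cases i <;> fin_cases j <;> rfl
  have hA : A.PosDef := by
    refine posDef_of_forall_leading_minor_pos hA_symm fun k hk ↦ ?_
    interval_cases k
    · simp
    · simpa [A] using hp
    · have hminor : 0 < (d * n - 1) * a - y * y := by linarith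
      simpa [A, det_fin_two] using hminor
    · simpa using zero_lt_one.trans_eq hA_det.symm
  obtain ⟨U, -, hU⟩ := (isCongruent_one_of_det_eq_one (by simp) hA hA_det).symm
  refine ⟨U 0 2, U 1 2, U 2 2, ?_⟩
  have := congrFun₂ hU 2 2
  simpa [A, mul_apply, Fin.sum_univ_three, ← sq] using this

theorem isSquare_neg_natCast_of_dvd_add_one {p d : ℕ} [Fact p.Prime] (hp : p % 4 = 1)
    (hd : d % 4 = 1) (h : d ∣ p + 1) : IsSquare (-d : ZMod p) := by
  have hp_odd : Odd p := Nat.odd_iff.2 (by omega)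
  have hmod : (p : ℤ) ≡ -1 [ZMOD d] := by
    rw [Int.modEq_comm, Int.modEq_iff_dvd, sub_neg_eq_add]
    exact_mod_cast h
  have hJ : jacobiSym (-d) p = 1 := by
    rw [jacobiSym.neg _ hp_odd, ZMod.χ₄_nat_one_mod_four hp, one_mul,
      jacobiSym.quadratic_reciprocity_one_mod_four hd hp_odd, jacobiSym.mod_left' hmod,
      jacobiSym.at_neg_one (Nat.odd_iff.2 (by omega)), ZMod.χ₄_nat_one_mod_four hd]
  by_contra hsq
  have := ZMod.nonsquare_iff_jacobiSym_eq_neg_one.2 (by exact_mod_cast hsq)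
  omega

theorem exists_prime_add_one_eq_mul {n : ℕ} (hn : n % 4 = 2) :
    ∃ p d : ℕ, p.Prime ∧ d % 4 = 1 ∧ p + 1 = d * n := by
  have hcop : (n - 1).Coprime (4 * n) := by
    refine .mul_right ?_ ?_
    · exact .pow_right 2 (Nat.coprime_two_right.2 (Nat.odd_iff.2 (by omega)))
    · exact (Nat.coprime_self_sub_left (by omega)).2 (Nat.coprime_one_left n)
  obtain ⟨p, -, hp, hmod⟩ := Nat.forall_exists_prime_gt_and_modEq 0 (by omega) hcop
  refine ⟨p, 4 * (p / (4 * n)) + 1, hp, by omega, ?_⟩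
  have hdiv := Nat.div_add_mod p (4 * n)
  rw [hmod, Nat.mod_eq_of_lt (by omega)] at hdiv
  have : 4 * n * (p / (4 * n)) + n = (4 * (p / (4 * n)) + 1) * n := by ring
  omega

theorem exists_eq_sum_three_sq_of_mod_four_eq_two {n : ℕ} (hn : n % 4 = 2) :
    ∃ p q r : ℤ, (n : ℤ) = p ^ 2 + q ^ 2 + r ^ 2 := by
  obtain ⟨p, d, hp, hd, hpd⟩ := exists_prime_add_one_eq_mul hn
  have := Fact.mk hp
  have hp4 : p % 4 = 1 := by
    have : d * n % 4 = 2 := by simp [Nat.mul_mod, hd, hn]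
    omega
  obtain ⟨w, hw⟩ := isSquare_neg_natCast_of_dvd_add_one hp4 hd ⟨n, hpd⟩
  obtain ⟨y, rfl⟩ := ZMod.intCast_surjective w
  have hdvd : (p : ℤ) ∣ y ^ 2 + d := by
    rw [← ZMod.intCast_zmod_eq_zero_iff_dvd]
    push_cast
    linear_combination -hw
  have hp_eq : (p : ℤ) = d * n - 1 := by
    rw [eq_sub_iff_add_eq]
    exact_mod_cast hpd
  have hp_pos : (0 : ℤ) < p := by exact_mod_cast hp.pos
  rw [hp_eq] at hdvd hp_pos
  exact exists_eq_sum_three_sq_of_dvd (by omega) hp_pos hdvd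

end ThreeSquares

theorem exists_odd_odd_even_of_sq_add_sq_add_sq_mod_four {p q r : ℤ}
    (h : (p ^ 2 + q ^ 2 + r ^ 2) % 4 = 2) :
    ∃ u v w : ℤ, p ^ 2 + q ^ 2 + r ^ 2 = (2 * u + 1) ^ 2 + (2 * v + 1) ^ 2 + (2 * w) ^ 2 := by
  obtain ⟨u, rfl | rfl⟩ := Int.even_or_odd' p <;> obtain ⟨v, rfl | rfl⟩ := Int.even_or_odd' q <;>
    obtain ⟨w, rfl | rfl⟩ := Int.even_or_odd' r
  case inl.inr.inr => exact ⟨v, w, u, by ring⟩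
  case inr.inl.inr => exact ⟨u, w, v, by ring⟩
  case inr.inr.inl => exact ⟨u, v, w, rfl⟩
  all_goals
    ring_nf at h
    omega

theorem two_mul_T (k : ℕ) : 2 * T k = k * (k + 1) :=
  Nat.mul_div_cancel' (Nat.even_mul_succ_self k).two_dvd

theorem exists_two_mul_T_eq_mul_add_one (w : ℤ) : ∃ k : ℕ, 2 * (T k : ℤ) = w * (w + 1) := by
  obtain ⟨k, rfl | rfl⟩ : ∃ k : ℕ, w = k ∨ w = -(k + 1 : ℤ) := by
    rcases le_or_gt 0 w with hw | hw
    · exact ⟨w.toNat, by omega⟩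
    · exact ⟨(-w - 1).toNat, by omega⟩
  all_goals
    refine ⟨k, ?_⟩
    have : 2 * (T k : ℤ) = k * (k + 1) := by exact_mod_cast two_mul_T k
    linear_combination this

theorem stmt_6 (m : ℕ) : ∃ x y z : ℕ, m = 2 * T x + T y + T z := by
  obtain ⟨p, q, r, hpqr⟩ := exists_eq_sum_three_sq_of_mod_four_eq_two
    (n := 4 * m + 2) (by omega)
  obtain ⟨u, v, w, huvw⟩ := exists_odd_odd_even_of_sq_add_sq_add_sq_mod_four
    (p := p) (q := q) (r := r) (by omega)
  obtain ⟨x, hx⟩ := exists_two_mul_T_eq_mul_add_one u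
  obtain ⟨y, hy⟩ := exists_two_mul_T_eq_mul_add_one (v + w)
  obtain ⟨z, hz⟩ := exists_two_mul_T_eq_mul_add_one (v - w)
  refine ⟨x, y, z, ?_⟩
  zify
  push_cast at hpqr
  linarith
end

section
/- If n is a non-negative integer such that 8n + 6 is divisible by 25, by 169, or by 61² = 3721, then n can be written as n = T_x + T_y + 4·T_z where x and y have different parity. -/
/-!
In terms of `u = x + y + 1`, `v = x - y`, `w = 2 z + 1`, a representation `n = T x + T y + 4 T z`
with `x`, `y` of different parity is a representation `4 n + 3 = u² + v² + 2 w²` with `u` even and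
`|v| < |u|`. If `4 n + 3 = c² m`, then `m = u² + v² + 2 w²` for some `u` even and `v` odd, because
`u² + v² + 2 w²` represents every odd natural number. When `|v| < |u|`, scaling `(u, v, w)` by `c`
is enough; otherwise write `c² = a² + b²` with `b` even and `a < b`, and replace the scaling of
`(u, v)` by multiplication by a Gaussian integer of norm `c²`: the even one of the two new squares
is then that of `a |u| + b |v|`, and it is the larger one.

That `u² + v² + 2 w²` represents every odd `m` is proved as in Gauss's three-squares theorem: by
reduction theory every positive definite ternary form of determinant `2` takes only values of this
shape. Dirichlet's theorem on primes in arithmetic progressions and quadratic reciprocity supply a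
prime `p = d m - 2` modulo which `-d` is a square, say `t p = s² + d`, and then
`t x² + p y² + m z² + 2 x z + 2 s x y` is such a form with value `m`.
-/

theorem exists_four_mul_add_sq_le_sq (a b : ℤ) (ha : 0 < a) :
    ∃ t : ℤ, 4 * (a * t + b) ^ 2 ≤ a ^ 2 := by
  have hmod := Int.emod_add_mul_ediv (2 * b + a) (2 * a)
  have hnonneg := Int.emod_nonneg (2 * b + a) (by omega : 2 * a ≠ 0)
  have hlt := Int.emod_lt_of_pos (2 * b + a) (by omega : 0 < 2 * a)
  refine ⟨-((2 * b + a) / (2 * a)), ?_⟩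
  nlinarith

/-- The integral binary quadratic form `a x² + 2 b x y + c y²`, with Gram matrix
`!![a, b; b, c]`. -/
structure BinaryForm where
  (a b c : ℤ)

namespace BinaryForm

/-- The value of a binary form at `(x, y)`. -/
def eval (Q : BinaryForm) (x y : ℤ) : ℤ := Q.a * x ^ 2 + 2 * Q.b * x * y + Q.c * y ^ 2

/-- The determinant of the Gram matrix of a binary form. -/
def det (Q : BinaryForm) : ℤ := Q.a * Q.c - Q.b ^ 2

/-- Positive definiteness of a binary form, in terms of the leading principal minors
(Sylvester's criterion). -/
structure PosDef (Q : BinaryForm) : Prop where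
  a_pos : 0 < Q.a
  det_pos : 0 < Q.det

theorem a_mul_eval (Q : BinaryForm) (x y : ℤ) :
    Q.a * Q.eval x y = (Q.a * x + Q.b * y) ^ 2 + Q.det * y ^ 2 := by
  simp only [eval, det]; ring

theorem eval_mul_eval (Q : BinaryForm) (p r x y : ℤ) :
    Q.eval p r * Q.eval x y =
      (Q.a * p * x + Q.b * (p * y + r * x) + Q.c * r * y) ^ 2 + Q.det * (p * y - r * x) ^ 2 := by
  simp only [eval, det]; ring

variable {Q : BinaryForm}

theorem PosDef.eval_pos (hQ : Q.PosDef) {x y : ℤ} (hxy : x ≠ 0 ∨ y ≠ 0) : 0 < Q.eval x y := by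
  have ha := hQ.a_pos
  have hdet := hQ.det_pos
  refine pos_of_mul_pos_right (b := Q.eval x y) (a := Q.a) ?_ ha.le
  rw [a_mul_eval]
  rcases eq_or_ne y 0 with rfl | hy
  · have hx : x ≠ 0 := by simpa using hxy
    simp only [mul_zero, add_zero]
    positivity
  · positivity

theorem PosDef.exists_eval_one_lt_a (hQ : Q.PosDef) (h : 4 * Q.det < 3 * Q.a ^ 2) :
    ∃ t, Q.eval t 1 < Q.a := by
  obtain ⟨t, ht⟩ := exists_four_mul_add_sq_le_sq Q.a Q.b hQ.a_pos
  refine ⟨t, lt_of_mul_lt_mul_left ?_ hQ.a_pos.le⟩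
  rw [a_mul_eval]
  linarith

theorem PosDef.exists_isCoprime_three_mul_eval_sq_le (hQ : Q.PosDef) :
    ∃ p r, IsCoprime p r ∧ 3 * Q.eval p r ^ 2 ≤ 4 * Q.det := by
  induction hk : Q.a.toNat using Nat.strong_induction_on generalizing Q with
  | _ k ih =>
    subst hk
    rcases le_or_gt (3 * Q.a ^ 2) (4 * Q.det) with hle | hgt
    · exact ⟨1, 0, isCoprime_one_left, by simpa [eval] using hle⟩
    obtain ⟨t, ht⟩ := hQ.exists_eval_one_lt_a hgt
    have hpos : 0 < Q.eval t 1 := hQ.eval_pos (.inr one_ne_zero)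
    let Q' : BinaryForm := ⟨Q.eval t 1, -(Q.a * t + Q.b), Q.a⟩
    have hdet : Q'.det = Q.det := by simp only [Q', det, eval]; ring
    have heval (p r : ℤ) : Q.eval (t * p - r) p = Q'.eval p r := by
      simp only [Q', eval]; ring
    obtain ⟨p, r, hpr, hle⟩ := ih Q'.a.toNat (by dsimp only [Q']; omega)
      ⟨hpos, hdet ▸ hQ.det_pos⟩ rfl
    refine ⟨t * p - r, p, ?_, by rwa [heval, ← hdet]⟩
    simpa [sub_eq_add_neg, add_comm] using hpr.symm.neg_left.add_mul_right_left t

theorem PosDef.exists_eval_eq_sq_add_det_mul_sq (hQ : Q.PosDef) (hdet : Q.det ≤ 2) (x y : ℤ) :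
    ∃ X Y, Q.eval x y = X ^ 2 + Q.det * Y ^ 2 := by
  obtain ⟨p, r, hpr, hle⟩ := hQ.exists_isCoprime_three_mul_eval_sq_le
  have hpos := hQ.eval_pos hpr.ne_zero_or_ne_zero
  have hone : Q.eval p r = 1 := by nlinarith
  exact ⟨_, _, by simpa only [hone, one_mul] using Q.eval_mul_eval p r x y⟩

end BinaryForm

/-- The integral ternary quadratic form `a x² + b y² + c z² + 2 f y z + 2 g x z + 2 h x y`, with
Gram matrix `!![a, h, g; h, b, f; g, f, c]`. -/
structure TernaryForm where
  (a b c f g h : ℤ)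

namespace TernaryForm

/-- The value of a ternary form at `(x, y, z)`. -/
def eval (Q : TernaryForm) (x y z : ℤ) : ℤ :=
  Q.a * x ^ 2 + Q.b * y ^ 2 + Q.c * z ^ 2 + 2 * Q.f * y * z + 2 * Q.g * x * z + 2 * Q.h * x * y

/-- The set of integers represented by a ternary form. -/
def values (Q : TernaryForm) : Set ℤ := {n | ∃ x y z, Q.eval x y z = n}

/-- The determinant of the Gram matrix of a ternary form. -/
def det (Q : TernaryForm) : ℤ :=
  Q.a * Q.b * Q.c + 2 * Q.f * Q.g * Q.h - Q.a * Q.f ^ 2 - Q.b * Q.g ^ 2 - Q.c * Q.h ^ 2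

/-- The binary form in `y`, `z` that remains when the square in `x` is completed in `a • Q`;
see `TernaryForm.a_mul_eval`. -/
def schur (Q : TernaryForm) : BinaryForm where
  a := Q.a * Q.b - Q.h ^ 2
  b := Q.a * Q.f - Q.g * Q.h
  c := Q.a * Q.c - Q.g ^ 2

/-- Positive definiteness of a ternary form, in terms of the leading principal minors
(Sylvester's criterion). -/
structure PosDef (Q : TernaryForm) : Prop where
  a_pos : 0 < Q.a
  minor_pos : 0 < Q.a * Q.b - Q.h ^ 2
  det_pos : 0 < Q.det

theorem a_mul_eval (Q : TernaryForm) (x y z : ℤ) :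
    Q.a * Q.eval x y z = (Q.a * x + (Q.h * y + Q.g * z)) ^ 2 + Q.schur.eval y z := by
  simp only [eval, BinaryForm.eval, schur]; ring

theorem det_schur (Q : TernaryForm) : Q.schur.det = Q.a * Q.det := by
  simp only [BinaryForm.det, schur, det]; ring

variable {Q : TernaryForm}

theorem PosDef.schur (hQ : Q.PosDef) : Q.schur.PosDef where
  a_pos := hQ.minor_pos
  det_pos := Q.det_schur ▸ mul_pos hQ.a_pos hQ.det_pos

theorem PosDef.exists_isCoprime_eval_lt_a (hQ : Q.PosDef) (h : 64 * Q.det < 27 * Q.a ^ 3) :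
    ∃ t p r, IsCoprime p r ∧ Q.eval t p r < Q.a := by
  have ha := hQ.a_pos
  obtain ⟨p, r, hpr, hle⟩ := hQ.schur.exists_isCoprime_three_mul_eval_sq_le
  have hpos := hQ.schur.eval_pos hpr.ne_zero_or_ne_zero
  rw [det_schur] at hle
  have hschur : 4 * Q.schur.eval p r < 3 * Q.a ^ 2 := by
    refine lt_of_pow_lt_pow_left₀ 2 (by positivity) ?_
    have := mul_lt_mul_of_pos_left h ha
    linarith
  obtain ⟨t, ht⟩ := exists_four_mul_add_sq_le_sq Q.a (Q.h * p + Q.g * r) ha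
  refine ⟨t, p, r, hpr, lt_of_mul_lt_mul_left ?_ ha.le⟩
  rw [a_mul_eval]
  linarith

theorem PosDef.exists_posDef_a_eq_eval (hQ : Q.PosDef) (t : ℤ) {p r : ℤ} (hpr : IsCoprime p r) :
    ∃ Q' : TernaryForm, Q'.PosDef ∧ Q'.a = Q.eval t p r ∧ Q'.det = Q.det ∧
      Q.values ⊆ Q'.values := by
  obtain ⟨s, q, hsq⟩ := id hpr
  -- `Q` in the basis `(t, p, r)`, `(1, 0, 0)`, `(0, -q, s)`
  let Q' : TernaryForm :=
    { a := Q.eval t p r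
      b := Q.a
      c := Q.eval 0 (-q) s
      f := Q.g * s - Q.h * q
      g := t * (Q.g * s - Q.h * q) - Q.b * p * q + Q.f * (p * s - q * r) + Q.c * r * s
      h := Q.a * t + Q.h * p + Q.g * r }
  have hdet : Q'.det = Q.det := by
    have : Q'.det = (s * p + q * r) ^ 2 * Q.det := by simp only [Q', det, eval]; ring
    rw [this, hsq, one_pow, one_mul]
  have hschur : 0 < Q.schur.eval p r := hQ.schur.eval_pos hpr.ne_zero_or_ne_zero
  have hminor : Q'.a * Q'.b - Q'.h ^ 2 = Q.schur.eval p r := by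
    simp only [Q', eval, BinaryForm.eval, TernaryForm.schur]; ring
  have ha : 0 < Q.eval t p r := by
    refine pos_of_mul_pos_right (a := Q.a) ?_ hQ.a_pos.le
    rw [a_mul_eval]
    positivity
  refine ⟨Q', ⟨ha, hminor ▸ hschur, hdet ▸ hQ.det_pos⟩, rfl, hdet, ?_⟩
  rintro _ ⟨x, y, z, rfl⟩
  refine ⟨s * y + q * z, x - t * (s * y + q * z), p * z - r * y, ?_⟩
  have hy : y = p * (s * y + q * z) - q * (p * z - r * y) := by linear_combination -y * hsq
  have hz : z = r * (s * y + q * z) + s * (p * z - r * y) := by linear_combination -z * hsq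
  generalize s * y + q * z = Y at *
  generalize p * z - r * y = Z at *
  rw [hy, hz]
  simp only [Q', eval]
  ring

theorem PosDef.exists_posDef_a_pow_three_le (hQ : Q.PosDef) :
    ∃ Q' : TernaryForm, Q'.PosDef ∧ 27 * Q'.a ^ 3 ≤ 64 * Q'.det ∧ Q'.det = Q.det ∧
      Q.values ⊆ Q'.values := by
  induction hk : Q.a.toNat using Nat.strong_induction_on generalizing Q with
  | _ k ih =>
    subst hk
    rcases le_or_gt (27 * Q.a ^ 3) (64 * Q.det) with hle | hgt
    · exact ⟨Q, hQ, hle, rfl, subset_rfl⟩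
    obtain ⟨t, p, r, hpr, hlt⟩ := hQ.exists_isCoprime_eval_lt_a hgt
    obtain ⟨Q₁, hQ₁, ha₁, hdet₁, hval₁⟩ := hQ.exists_posDef_a_eq_eval t hpr
    obtain ⟨Q₂, hQ₂, hle₂, hdet₂, hval₂⟩ := ih Q₁.a.toNat (by have := hQ₁.a_pos; omega) hQ₁ rfl
    exact ⟨Q₂, hQ₂, hle₂, hdet₂.trans hdet₁, hval₁.trans hval₂⟩

theorem PosDef.exists_eq_sq_add_sq_add_det_mul_sq (hQ : Q.PosDef) (hdet : Q.det ≤ 2) {n : ℤ}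
    (hn : n ∈ Q.values) : ∃ X Y Z, n = X ^ 2 + Y ^ 2 + Q.det * Z ^ 2 := by
  obtain ⟨Q', hQ', hle, hdet', hval⟩ := hQ.exists_posDef_a_pow_three_le
  rw [← hdet'] at hdet ⊢
  have ha : Q'.a = 1 := by
    refine le_antisymm ?_ hQ'.a_pos
    by_contra! hlt
    have := pow_le_pow_left₀ zero_le_two (show 2 ≤ Q'.a from hlt) 3
    linarith
  have hschur : Q'.schur.det = Q'.det := by rw [det_schur, ha, one_mul]
  obtain ⟨x, y, z, rfl⟩ := hval hn
  obtain ⟨Y, Z, hYZ⟩ := hQ'.schur.exists_eval_eq_sq_add_det_mul_sq (hschur.trans_le hdet) y z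
  have hsq := Q'.a_mul_eval x y z
  rw [ha, one_mul, hYZ, hschur] at hsq
  exact ⟨_, Y, Z, by rw [hsq, add_assoc]⟩

end TernaryForm

theorem isSquare_neg_of_dvd_add_two {p d : ℕ} [Fact p.Prime] (hp : p % 4 = 1)
    (hd : d % 8 = 1 ∨ d % 8 = 3) (h : d ∣ p + 2) : IsSquare ((-d : ℤ) : ZMod p) := by
  have hp_odd : Odd p := Nat.odd_iff.2 (by omega)
  have hd_odd : Odd d := Nat.odd_iff.2 (by omega)
  have hmod : (p : ℤ) % d = -2 % d :=
    ((Int.modEq_iff_dvd.2 (by simpa using by exact_mod_cast h)) : -2 ≡ (p : ℤ) [ZMOD d]).symm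
  refine ZMod.isSquare_of_jacobiSym_eq_one ?_
  calc
    jacobiSym (-d) p = jacobiSym d p := by
      rw [jacobiSym.neg _ hp_odd, ZMod.χ₄_nat_one_mod_four hp, one_mul]
    _ = jacobiSym p d := jacobiSym.quadratic_reciprocity_one_mod_four' hd_odd hp
    _ = jacobiSym (-2) d := jacobiSym.mod_left' hmod
    _ = 1 := by
      rw [jacobiSym.at_neg_two hd_odd, ZMod.χ₈'_nat_eq_if_mod_eight, if_neg (by omega), if_pos hd]

theorem exists_prime_add_two_eq_mul {m : ℕ} (hm : Odd m) :
    ∃ p d : ℕ, p.Prime ∧ p % 4 = 1 ∧ (d % 8 = 1 ∨ d % 8 = 3) ∧ p + 2 = d * m := by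
  have hm2 := Nat.odd_iff.1 hm
  obtain ⟨d₀, hd₀, hmod⟩ : ∃ d₀, (d₀ = 1 ∨ d₀ = 3) ∧ d₀ * m % 4 = 3 := by
    rcases (by omega : m % 4 = 1 ∨ m % 4 = 3) with h | h
    exacts [⟨3, by omega⟩, ⟨1, by omega⟩]
  obtain ⟨a, ha⟩ : ∃ a, d₀ * m = a + 2 := ⟨d₀ * m - 2, by omega⟩
  have hcop : a.Coprime (8 * m) := by
    have ha_odd : a.Coprime 2 := Nat.coprime_two_right.2 (Nat.odd_iff.2 (by omega))
    refine .mul_right (ha_odd.pow_right 3) (.coprime_mul_left_right (k := d₀) ?_)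
    rwa [ha, Nat.coprime_self_add_right]
  obtain ⟨p, hap, hp, hpa⟩ := Nat.forall_exists_prime_gt_and_modEq a (by omega) hcop
  obtain ⟨v, hv⟩ := (Nat.modEq_iff_dvd' hap.le).1 hpa.symm
  have hpd : p = 8 * (m * v) + a := by rw [← mul_assoc]; omega
  exact ⟨p, 8 * v + d₀, hp, by omega, by omega, by linarith⟩

theorem exists_eq_sq_add_sq_add_two_mul_sq {m : ℕ} (hm : Odd m) :
    ∃ u v w : ℕ, m = u ^ 2 + v ^ 2 + 2 * w ^ 2 := by
  obtain ⟨p, d, hp, hp4, hd, hpd⟩ := exists_prime_add_two_eq_mul hm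
  have := Fact.mk hp
  obtain ⟨r, hr⟩ := isSquare_neg_of_dvd_add_two hp4 hd ⟨m, hpd⟩
  obtain ⟨s, rfl⟩ := ZMod.intCast_surjective r
  obtain ⟨t, ht⟩ : (p : ℤ) ∣ s ^ 2 + d := by
    rw [← ZMod.intCast_zmod_eq_zero_iff_dvd]
    push_cast at hr ⊢
    linear_combination -hr
  have hd0 : 0 < d := by omega
  have hp0 := hp.pos
  have ht0 : 0 < t := pos_of_mul_pos_right (a := (p : ℤ)) (by rw [← ht]; positivity) (by positivity)
  let Q : TernaryForm := { a := t, b := p, c := m, f := 0, g := 1, h := s }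
  have hdet : Q.det = 2 := by
    have hpd' : (p : ℤ) + 2 = d * m := by exact_mod_cast hpd
    simp only [TernaryForm.det, Q]
    linear_combination -(m : ℤ) * ht - hpd'
  have hQ : Q.PosDef := ⟨ht0, by dsimp only [Q]; linarith, by rw [hdet]; norm_num⟩
  have hm_mem : (m : ℤ) ∈ Q.values := ⟨0, 0, 1, by simp [TernaryForm.eval, Q]⟩
  obtain ⟨X, Y, Z, h⟩ := hQ.exists_eq_sq_add_sq_add_det_mul_sq hdet.le hm_mem
  refine ⟨X.natAbs, Y.natAbs, Z.natAbs, ?_⟩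
  zify
  simpa only [sq_abs, hdet] using h

theorem exists_even_odd_eq_sq_add_sq_add_two_mul_sq {m : ℕ} (hm : Odd m) :
    ∃ u v w : ℕ, Even u ∧ Odd v ∧ m = u ^ 2 + v ^ 2 + 2 * w ^ 2 := by
  obtain ⟨u, v, w, rfl⟩ := exists_eq_sq_add_sq_add_two_mul_sq hm
  have huv : Odd u ↔ Even v := by simpa [Nat.odd_add, Nat.odd_pow_iff, parity_simps] using hm
  rcases Nat.even_or_odd u with hu | hu
  · exact ⟨u, v, w, hu, by grind, rfl⟩
  · exact ⟨v, u, w, huv.1 hu, hu, by rw [add_comm (v ^ 2)]⟩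

theorem eight_mul_T_add_one (k : ℕ) : 8 * T k + 1 = (2 * k + 1) ^ 2 := by
  have : 2 * T k = k * (k + 1) := Nat.mul_div_cancel' (Nat.even_mul_succ_self k).two_dvd
  linarith

theorem odd_and_odd_of_four_mul_add_three_eq {n u v w : ℤ} (hu : Even u)
    (h : 4 * n + 3 = u ^ 2 + v ^ 2 + 2 * w ^ 2) : Odd v ∧ Odd w := by
  have hu4 : u ^ 2 % 4 = 0 := Int.emod_eq_zero_of_dvd (pow_dvd_pow_of_dvd hu.two_dvd 2)
  have hv_odd : Odd (v ^ 2) := Int.odd_iff.2 (by omega)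
  have hv : Odd v := (Int.odd_pow' two_ne_zero).1 hv_odd
  have hv4 := Int.sq_mod_four_eq_one_of_odd hv
  have hw_odd : Odd (w ^ 2) := Int.odd_iff.2 (by omega)
  exact ⟨hv, (Int.odd_pow' two_ne_zero).1 hw_odd⟩

theorem exists_T_of_four_mul_add_three_eq {n : ℕ} {u v w : ℤ} (hu : Even u) (huv : |v| < |u|)
    (h : (4 * n + 3 : ℤ) = u ^ 2 + v ^ 2 + 2 * w ^ 2) :
    ∃ x y z : ℕ, n = T x + T y + 4 * T z ∧ x % 2 ≠ y % 2 := by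
  obtain ⟨hv, hw⟩ := odd_and_odd_of_four_mul_add_three_eq hu h
  obtain ⟨x, hx⟩ : ∃ x : ℕ, |u| + v = 2 * x + 1 := ⟨((|u| + v - 1) / 2).toNat, by grind⟩
  obtain ⟨y, hy⟩ : ∃ y : ℕ, |u| - v = 2 * y + 1 := ⟨((|u| - v - 1) / 2).toNat, by grind⟩
  obtain ⟨z, hz⟩ : ∃ z : ℕ, |w| = 2 * z + 1 := ⟨((|w| - 1) / 2).toNat, by grind⟩
  refine ⟨x, y, z, ?_, by grind⟩
  have hTx : (8 * T x + 1 : ℤ) = (|u| + v) ^ 2 := by rw [hx]; exact_mod_cast eight_mul_T_add_one x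
  have hTy : (8 * T y + 1 : ℤ) = (|u| - v) ^ 2 := by rw [hy]; exact_mod_cast eight_mul_T_add_one y
  have hTz : (8 * T z + 1 : ℤ) = w ^ 2 := by
    rw [← sq_abs w, hz]; exact_mod_cast eight_mul_T_add_one z
  zify
  linarith [sq_abs u]

theorem abs_mul_sub_mul_lt_mul_add_mul {R : Type*} [CommRing R] [LinearOrder R]
    [IsStrictOrderedRing R] {a b u v : R} (ha : 0 ≤ a) (hab : a < b) (hu : 0 ≤ u) (huv : u < v) :
    |b * u - a * v| < a * u + b * v := by
  rw [abs_lt]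
  constructor <;> nlinarith

theorem stmt_12_general {n a b c : ℕ} (habc : a ^ 2 + b ^ 2 = c ^ 2) (hb : Even b) (hab : a < b)
    (hn : c ^ 2 ∣ 8 * n + 6) : ∃ x y z : ℕ, n = T x + T y + 4 * T z ∧ x % 2 ≠ y % 2 := by
  have hc : Odd c := by
    by_contra hc
    have := (pow_dvd_pow_of_dvd (Nat.not_odd_iff_even.1 hc).two_dvd 2).trans hn
    omega
  obtain ⟨m, hm⟩ : c ^ 2 ∣ 4 * n + 3 :=
    (Nat.coprime_two_right.2 hc.pow).dvd_of_dvd_mul_left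
      (by rwa [show 2 * (4 * n + 3) = 8 * n + 6 by ring])
  have hm_odd : Odd m := Nat.Odd.of_mul_right (m := c ^ 2) (hm ▸ Nat.odd_iff.2 (by omega))
  obtain ⟨u, v, w, hu, hv, rfl⟩ := exists_even_odd_eq_sq_add_sq_add_two_mul_sq hm_odd
  zify at habc hm
  rcases lt_or_ge v u with hvu | huv
  · refine exists_T_of_four_mul_add_three_eq (u := c * u) (v := c * v) (w := c * w) ?_ ?_ ?_
    · exact_mod_cast hu.mul_left c
    · exact_mod_cast Nat.mul_lt_mul_of_pos_left hvu hc.pos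
    · linear_combination hm
  · have hlt : u < v := huv.lt_of_ne fun h => Nat.not_even_iff_odd.2 hv (h ▸ hu)
    refine exists_T_of_four_mul_add_three_eq (u := a * u + b * v) (v := b * u - a * v)
      (w := c * w) ?_ ?_ ?_
    · exact_mod_cast (hu.mul_left a).add (hb.mul_right v)
    · exact (abs_mul_sub_mul_lt_mul_add_mul (by positivity) (by exact_mod_cast hab) (by positivity)
        (by exact_mod_cast hlt)).trans_le (le_abs_self _)
    · linear_combination hm - (u ^ 2 + v ^ 2 : ℤ) * habc

theorem stmt_12 (n : ℕ)
    (h : 25 ∣ 8 * n + 6 ∨ 169 ∣ 8 * n + 6 ∨ 3721 ∣ 8 * n + 6) :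
    ∃ x y z : ℕ, n = T x + T y + 4 * T z ∧ x % 2 ≠ y % 2 := by
  rcases h with h | h | h
  · exact stmt_12_general (a := 3) (b := 4) (c := 5) rfl (by decide) (by decide) h
  · exact stmt_12_general (a := 5) (b := 12) (c := 13) rfl (by decide) (by decide) h
  · exact stmt_12_general (a := 11) (b := 60) (c := 61) rfl (by decide) (by decide) h
end
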